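/- There is an absolute constant C > 0 such that the following holds. Let 1 ≤ r ≤ m be integers and let RM(r,m) ⊆ F_2^{2^m} be the binary Reed–Muller code of order r, i.e., the set of evaluation vectors over all points of F_2^m of m-variate polynomials over F_2 of total degree at most r. Let ε ∈ (0, 1/4), let A be the number of codewords of RM(r,m) of relative Hamming weight at most (1/2)(1 − ε²), assume A ≥ 2, and set L = ⌈A/ε²⌉. Then for every integer n ≥ C·ln|RM(r,m)|/ε², the randomly punctured code E of length n obtained from RM(r,m) is ((1/2)(1 − 4ε), L − 1)-list decodable with probability at least 1 − 1/|RM(r,m)|. -/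

import Mathlib

open Finset
open scoped BigOperators Classical

noncomputable section

/-- The relative Hamming distance between two words indexed by the finite type `ι`. -/
def relDistOn {ι : Type*} [Fintype ι] {α : Type*} [DecidableEq α] (x y : ι → α) : ℝ :=
  (hammingDist x y : ℝ) / Fintype.card ι

/-- The binary Reed–Muller code `RM(r,m)`: the set of evaluation vectors, over all points of
`F_2^m`, of `m`-variate polynomials over `F_2` of total degree at most `r`. -/
def RMcode (r m : ℕ) : Set ((Fin m → ZMod 2) → ZMod 2) :=
  {f | ∃ P : MvPolynomial (Fin m) (ZMod 2),
    P.totalDegree ≤ r ∧ ∀ v : Fin m → ZMod 2, f v = MvPolynomial.eval v P}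

/-!
Write `S_Λ(v)` for the sum of the signs `(-1) ^ f(v)` over a list `Λ` of `L` codewords. If all the
members of `Λ`, punctured at `t₁, …, tₙ`, lie in a ball of relative radius `(1 - 4ε) / 2`, then
`∑ⱼ |S_Λ(tⱼ)| ≥ 4εLn`, whatever the centre. At a uniform point `v`, however, `𝔼 S_Λ(v)² ≤ 2(εL)²`,
since all but `A ≤ ε²L` codewords are almost uncorrelated with a given one; hence
`𝔼 |S_Λ(v)| ≤ 3εL/2`.

To rule out a deviation for all lists at once, compare with an independent second sample, whose
sums are at most `3εLn` with probability at least `1/2` by Markov's inequality. The difference of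
the two samples can be multiplied by random signs `σⱼ`, and, by contraction, `∑ⱼ σⱼ |S_Λ(tⱼ)|` can
be replaced by `∑ⱼ σⱼ S_Λ(tⱼ)`. The latter is linear in `Λ`, so if it is large, it is large already
for a single codeword: the union bound runs over the `N` codewords and not over the lists, and
Hoeffding's inequality bounds the failure probability by `4N exp(-ε²n/8) ≤ 1/N`.
-/

/-! ### Uniform probability -/

section UnifProb

variable {α β : Type*} [Fintype α] [Fintype β]

/-- The probability of the event `p` at a uniformly random point of a finite type, encoded as the
average of the indicator of `p`. -/
def unifProb (p : α → Prop) : ℝ := 𝔼 x, if p x then 1 else 0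

lemma unifProb_eq_card_div (p : α → Prop) [DecidablePred p] :
    unifProb p = #{x | p x} / Fintype.card α := by
  rw [unifProb, Fintype.expect_eq_sum_div_card, ← sum_boole]
  congr!

lemma unifProb_nonneg (p : α → Prop) : 0 ≤ unifProb p :=
  expect_nonneg fun _ _ => by positivity

lemma unifProb_mono {p q : α → Prop} (h : ∀ x, p x → q x) : unifProb p ≤ unifProb q :=
  expect_le_expect fun x _ => by
    have := h x
    split_ifs <;> simp_all

lemma unifProb_not [Nonempty α] (p : α → Prop) : unifProb (fun x => ¬ p x) = 1 - unifProb p := by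
  rw [unifProb, unifProb, ← Fintype.expect_one (M := ℝ) (ι := α), ← expect_sub_distrib]
  exact expect_congr rfl fun x _ => by split_ifs <;> simp

lemma unifProb_or_le (p q : α → Prop) :
    unifProb (fun x => p x ∨ q x) ≤ unifProb p + unifProb q := by
  rw [unifProb, unifProb, unifProb, ← expect_add_distrib]
  exact expect_le_expect fun x _ => by split_ifs <;> simp_all

lemma unifProb_exists_le (p : β → α → Prop) :
    unifProb (fun x => ∃ b, p b x) ≤ ∑ b, unifProb (p b) := by
  simp only [unifProb, ← expect_sum_comm]
  refine expect_le_expect fun x _ => ?_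
  split_ifs with h
  · obtain ⟨b, hb⟩ := h
    calc (1 : ℝ) = if p b x then 1 else 0 := (if_pos hb).symm
      _ ≤ _ := single_le_sum (f := fun b => if p b x then (1 : ℝ) else 0)
        (fun b _ => by positivity) (mem_univ b)
  · exact sum_nonneg fun b _ => by positivity

lemma unifProb_comp_equiv (e : α ≃ β) (p : β → Prop) : unifProb (fun x => p (e x)) = unifProb p :=
  Fintype.expect_equiv e _ _ fun _ => rfl

lemma unifProb_prod (p : α × β → Prop) : unifProb p = 𝔼 x, unifProb fun y => p (x, y) := by
  simp only [unifProb, ← univ_product_univ, expect_product]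

lemma expect_unifProb_comm (p : α → β → Prop) :
    𝔼 x, unifProb (p x) = 𝔼 y, unifProb fun x => p x y :=
  expect_comm _ _ _

lemma mul_unifProb_le_expect {f : α → ℝ} (hf : ∀ x, 0 ≤ f x) (a : ℝ) :
    a * unifProb (fun x => a ≤ f x) ≤ 𝔼 x, f x := by
  rw [unifProb, mul_expect]
  exact expect_le_expect fun x _ => by
    split_ifs with h
    · simpa only [mul_one] using h
    · simpa only [mul_zero] using hf x

lemma half_le_unifProb_le [Nonempty α] {f : α → ℝ} (hf : ∀ x, 0 ≤ f x) {μ : ℝ} (hμ : 0 < μ)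
    (h : 𝔼 x, f x ≤ μ) : 1 / 2 ≤ unifProb fun x => f x ≤ 2 * μ := by
  have hmarkov := (mul_unifProb_le_expect hf (2 * μ)).trans h
  have hnot : 1 - unifProb (fun x => f x ≤ 2 * μ) ≤ unifProb fun x => 2 * μ ≤ f x := by
    rw [← unifProb_not]
    exact unifProb_mono fun x hx => (not_le.1 hx).le
  nlinarith

lemma unifProb_le_exp_mul_expect_exp (f : α → ℝ) {l : ℝ} (hl : 0 ≤ l) (t : ℝ) :
    unifProb (fun x => t ≤ f x) ≤ Real.exp (-(l * t)) * 𝔼 x, Real.exp (l * f x) := by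
  calc unifProb (fun x => t ≤ f x) ≤ unifProb fun x => Real.exp (l * t) ≤ Real.exp (l * f x) :=
        unifProb_mono fun x hx => Real.exp_le_exp.2 (mul_le_mul_of_nonneg_left hx hl)
    _ = Real.exp (-(l * t)) *
          (Real.exp (l * t) * unifProb fun x => Real.exp (l * t) ≤ Real.exp (l * f x)) := by
        rw [← mul_assoc, ← Real.exp_add, neg_add_cancel, Real.exp_zero, one_mul]
    _ ≤ _ := by
        gcongr
        exact mul_unifProb_le_expect (fun x => (Real.exp_pos _).le) _

lemma unifProb_fin_succ {n : ℕ} (p : (Fin (n + 1) → α) → Prop) :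
    unifProb p = 𝔼 x, unifProb fun y : Fin n → α => p (Fin.cons x y) := by
  rw [← unifProb_comp_equiv (Fin.consEquiv fun _ => α), unifProb_prod]
  rfl

section Pi

variable {ι : Type*} [Fintype ι] [DecidableEq ι]

lemma expect_prod_apply (f : ι → α → ℝ) : 𝔼 T : ι → α, ∏ j, f j (T j) = ∏ j, 𝔼 x, f j x := by
  simp only [Fintype.expect_eq_sum_div_card, prod_div_distrib, Fintype.prod_sum, prod_const,
    card_univ, Fintype.card_fun, Nat.cast_pow]

lemma expect_apply_eq_expect [Nonempty α] (g : α → ℝ) (j : ι) :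
    𝔼 T : ι → α, g (T j) = 𝔼 x, g x := by
  have h := expect_prod_apply fun i x => if i = j then g x else 1
  have hfactor (i : ι) :
      (𝔼 x, if i = j then g x else 1) = if i = j then 𝔼 x, g x else 1 := by
    split_ifs
    · rfl
    · exact Fintype.expect_one
  simpa only [hfactor, prod_ite_eq', mem_univ, if_true] using h

end Pi

end UnifProb

/-! ### Rademacher sums -/

section Rademacher

variable {I ι κ : Type*}

lemma expect_int_units (f : ℤˣ → ℝ) : 𝔼 s, f s = (f 1 + f (-1)) / 2 := by
  have huniv : (univ : Finset ℤˣ) = {1, -1} := rfl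
  rw [expect_eq_sum_div_card, huniv, sum_pair (by decide), card_pair (by decide)]
  norm_num

lemma expect_exp_sum_smul_le [Fintype ι] [DecidableEq ι] (a : ι → ℝ) (l : ℝ) :
    𝔼 σ : ι → ℤˣ, Real.exp (l * ∑ j, σ j • a j) ≤ Real.exp (l ^ 2 * (∑ j, a j ^ 2) / 2) := by
  calc _ = ∏ j, Real.cosh (l * a j) := by
        simp only [mul_sum, Real.exp_sum]
        rw [expect_prod_apply fun j (s : ℤˣ) => Real.exp (l * s • a j)]
        simp only [expect_int_units, one_smul, Units.neg_smul, mul_neg, Real.cosh_eq]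
    _ ≤ ∏ j, Real.exp ((l * a j) ^ 2 / 2) :=
        prod_le_prod (fun j _ => (Real.cosh_pos _).le) fun j _ => Real.cosh_le_exp_half_sq _
    _ = _ := by
        rw [← Real.exp_sum, ← sum_div, mul_sum]
        simp only [mul_pow]

lemma unifProb_le_sum_smul_le [Fintype ι] [DecidableEq ι] {a : ι → ℝ} {v : ℝ}
    (ha : ∑ j, a j ^ 2 ≤ v) {t : ℝ} (ht : 0 ≤ t) :
    unifProb (fun σ : ι → ℤˣ => t ≤ ∑ j, σ j • a j) ≤ Real.exp (-(t ^ 2 / (2 * v))) := by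
  have hv : 0 ≤ v := (sum_nonneg fun j _ => sq_nonneg (a j)).trans ha
  calc _ ≤ Real.exp (-(t / v * t)) * 𝔼 σ : ι → ℤˣ, Real.exp (t / v * ∑ j, σ j • a j) :=
        unifProb_le_exp_mul_expect_exp _ (by positivity) t
    _ ≤ Real.exp (-(t / v * t)) * Real.exp ((t / v) ^ 2 * v / 2) := by
        gcongr
        refine (expect_exp_sum_smul_le a _).trans ?_
        gcongr
    _ = _ := by
        rw [← Real.exp_add]
        congr 1
        rcases hv.eq_or_lt with rfl | hv
        · simp
        · field_simp
          ring

/-- If some `i` satisfies the left condition with the sign `-1`, it satisfies the right condition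
with both signs; with the sign `1`, it does so with the sign of `y i`. -/
lemma unifProb_exists_le_smul_abs_le (b y : I → ℝ) :
    unifProb (fun s : ℤˣ => ∃ i, b i ≤ s • |y i|) ≤ unifProb fun s : ℤˣ => ∃ i, b i ≤ s • y i := by
  simp only [unifProb, expect_int_units, Units.neg_smul, one_smul]
  have hneg : (∃ i, b i ≤ -|y i|) → (∃ i, b i ≤ y i) ∧ ∃ i, b i ≤ -y i := fun ⟨i, hi⟩ =>
    ⟨⟨i, hi.trans (neg_abs_le _)⟩, i, hi.trans (neg_le_neg (le_abs_self _))⟩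
  have hpos : (∃ i, b i ≤ |y i|) → (∃ i, b i ≤ y i) ∨ ∃ i, b i ≤ -y i := fun ⟨i, hi⟩ =>
    (le_abs.1 hi).imp (⟨i, ·⟩) (⟨i, ·⟩)
  split_ifs <;> first | tauto | norm_num

/-- The absolute values are removed one coordinate at a time, conditionally on the other signs. -/
lemma unifProb_exists_le_sum_smul_abs_le {n : ℕ} (a : I → ℝ) (x : I → Fin n → ℝ) :
    unifProb (fun σ : Fin n → ℤˣ => ∃ i, a i ≤ ∑ j, σ j • |x i j|) ≤
      unifProb fun σ : Fin n → ℤˣ => ∃ i, a i ≤ ∑ j, σ j • x i j := by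
  induction n generalizing a with
  | zero => simp
  | succ n ih =>
    simp only [unifProb_fin_succ, Fin.sum_univ_succ, Fin.cons_zero, Fin.cons_succ]
    calc _ = 𝔼 s : ℤˣ, unifProb fun σ : Fin n → ℤˣ =>
            ∃ i, a i - s • |x i 0| ≤ ∑ j, σ j • |x i j.succ| := by
          simp only [sub_le_iff_le_add']
      _ ≤ 𝔼 s : ℤˣ, unifProb fun σ : Fin n → ℤˣ =>
            ∃ i, a i - s • |x i 0| ≤ ∑ j, σ j • x i j.succ :=
          expect_le_expect fun s _ => ih _ _
      _ = 𝔼 σ : Fin n → ℤˣ, unifProb fun s : ℤˣ =>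
            ∃ i, a i - ∑ j, σ j • x i j.succ ≤ s • |x i 0| := by
          rw [expect_unifProb_comm]
          simp only [sub_le_comm]
      _ ≤ 𝔼 σ : Fin n → ℤˣ, unifProb fun s : ℤˣ =>
            ∃ i, a i - ∑ j, σ j • x i j.succ ≤ s • x i 0 :=
          expect_le_expect fun σ _ => unifProb_exists_le_smul_abs_le _ _
      _ = _ := by
          rw [expect_unifProb_comm]
          simp only [sub_le_iff_le_add]

/-- After contraction, a large sum over a list forces a large sum for one of its members, so the
union bound runs over `κ` and not over the lists. -/
lemma unifProb_exists_le_sum_smul_abs_sum_le [Fintype κ] {n : ℕ} {x : κ → Fin n → ℝ} {v : ℝ}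
    (hx : ∀ k, ∑ j, x k j ^ 2 ≤ v) {L : ℕ} (hL : 0 < L) {t : ℝ} (ht : 0 ≤ t) :
    unifProb (fun σ : Fin n → ℤˣ =>
        ∃ Λ : {Λ : Finset κ // #Λ = L}, L * t ≤ ∑ j, σ j • |∑ k ∈ Λ.1, x k j|) ≤
      Fintype.card κ * Real.exp (-(t ^ 2 / (2 * v))) := by
  calc _ ≤ unifProb fun σ : Fin n → ℤˣ =>
          ∃ Λ : {Λ : Finset κ // #Λ = L}, L * t ≤ ∑ j, σ j • ∑ k ∈ Λ.1, x k j :=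
        unifProb_exists_le_sum_smul_abs_le _ _
    _ ≤ unifProb fun σ : Fin n → ℤˣ => ∃ k, t ≤ ∑ j, σ j • x k j := by
        refine unifProb_mono fun σ ⟨⟨Λ, hΛ⟩, h⟩ => ?_
        have hsum : ∑ _k ∈ Λ, t ≤ ∑ k ∈ Λ, ∑ j, σ j • x k j := by
          rw [sum_const, hΛ, nsmul_eq_mul, sum_comm]
          simpa only [smul_sum] using h
        obtain ⟨k, -, hk⟩ := exists_le_of_sum_le (card_pos.1 (hΛ ▸ hL)) hsum
        exact ⟨k, hk⟩
    _ ≤ ∑ k, unifProb fun σ : Fin n → ℤˣ => t ≤ ∑ j, σ j • x k j := unifProb_exists_le _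
    _ ≤ ∑ _k : κ, Real.exp (-(t ^ 2 / (2 * v))) :=
        sum_le_sum fun k _ => unifProb_le_sum_smul_le (hx k) ht
    _ = _ := by rw [sum_const, card_univ, nsmul_eq_mul]

end Rademacher

/-! ### Symmetrization -/

section Symmetrization

variable {I ι V κ : Type*}

lemma unifProb_exists_add_le_le [Fintype V] (F : I → V → ℝ) {s : ℝ}
    (hs : ∀ i, 1 / 2 ≤ unifProb fun y => F i y ≤ s) (t : ℝ) :
    unifProb (fun x => ∃ i, s + t ≤ F i x) ≤
      2 * unifProb fun z : V × V => ∃ i, t ≤ F i z.1 - F i z.2 := by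
  rw [unifProb_prod, mul_expect]
  refine expect_le_expect fun x _ => ?_
  split_ifs with hx
  · obtain ⟨i, hi⟩ := hx
    have hmono : (unifProb fun y => F i y ≤ s) ≤ unifProb fun y => ∃ i, t ≤ F i x - F i y :=
      unifProb_mono fun y hy => ⟨i, by linarith⟩
    linarith [hs i]
  · exact mul_nonneg zero_le_two (unifProb_nonneg _)

lemma unifProb_exists_le_sum_smul_eq [Fintype ι] [DecidableEq ι] [Fintype V] (e : V ≃ V)
    {d : I → V → ℝ} (hd : ∀ i x, d i (e x) = -d i x) (σ : ι → ℤˣ) (t : ℝ) :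
    unifProb (fun T : ι → V => ∃ i, t ≤ ∑ j, σ j • d i (T j)) =
      unifProb fun T : ι → V => ∃ i, t ≤ ∑ j, d i (T j) := by
  rw [← unifProb_comp_equiv (Equiv.piCongrRight fun j => if σ j = 1 then Equiv.refl V else e)
    fun T : ι → V => ∃ i, t ≤ ∑ j, d i (T j)]
  have hflip : ∀ i j x, d i ((if σ j = 1 then Equiv.refl V else e) x) = σ j • d i x := by
    intro i j x
    rcases Int.units_eq_one_or (σ j) with h | h <;> simp [h, hd, Units.neg_smul]
  simp only [Equiv.piCongrRight_apply, Pi.map_apply, hflip]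

/-- Exchanging some of the coordinates of two independent samples does not change their joint
distribution, so the signs may be chosen at random. -/
lemma unifProb_exists_le_sum_sub_sum_le [Fintype ι] [DecidableEq ι] [Fintype V] [Nonempty V]
    (g : I → V → ℝ) {t δ : ℝ}
    (h : ∀ T : ι → V, unifProb (fun σ : ι → ℤˣ => ∃ i, t ≤ ∑ j, σ j • g i (T j)) ≤ δ) :
    unifProb (fun z : (ι → V) × (ι → V) => ∃ i, 2 * t ≤ ∑ j, g i (z.1 j) - ∑ j, g i (z.2 j)) ≤
      2 * δ := by
  have hpair (W : ι → V × V) : unifProb (fun σ : ι → ℤˣ =>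
      ∃ i, 2 * t ≤ ∑ j, σ j • (g i (W j).1 - g i (W j).2)) ≤ 2 * δ := by
    calc _ ≤ unifProb fun σ : ι → ℤˣ => (∃ i, t ≤ ∑ j, σ j • g i (W j).1) ∨
            ∃ i, t ≤ ∑ j, (-σ) j • g i (W j).2 := by
          refine unifProb_mono fun σ ⟨i, hi⟩ => ?_
          simp only [smul_sub, sum_sub_distrib, Pi.neg_apply, Units.neg_smul,
            sum_neg_distrib] at hi ⊢
          by_contra! hlt
          linarith [hlt.1 i, hlt.2 i]
      _ ≤ unifProb (fun σ : ι → ℤˣ => ∃ i, t ≤ ∑ j, σ j • g i (W j).1) +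
            unifProb fun σ : ι → ℤˣ => ∃ i, t ≤ ∑ j, (-σ) j • g i (W j).2 := unifProb_or_le _ _
      _ ≤ δ + δ := add_le_add (h _) <|
          (unifProb_comp_equiv (Equiv.neg (ι → ℤˣ))
            fun σ => ∃ i, t ≤ ∑ j, σ j • g i (W j).2).trans_le (h _)
      _ = 2 * δ := (two_mul δ).symm
  calc _ = unifProb fun W : ι → V × V => ∃ i, 2 * t ≤ ∑ j, (g i (W j).1 - g i (W j).2) := by
        rw [← unifProb_comp_equiv (Equiv.arrowProdEquivProdArrow ι (fun _ => V) fun _ => V)]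
        simp only [Equiv.arrowProdEquivProdArrow_apply, sum_sub_distrib]
    _ = 𝔼 σ : ι → ℤˣ, unifProb fun W : ι → V × V =>
          ∃ i, 2 * t ≤ ∑ j, σ j • (g i (W j).1 - g i (W j).2) := by
        rw [← Fintype.expect_const (ι := ι → ℤˣ) (unifProb _)]
        exact expect_congr rfl fun σ _ => (unifProb_exists_le_sum_smul_eq (Equiv.prodComm V V)
          (d := fun i z => g i z.1 - g i z.2) (fun i z => (neg_sub _ _).symm) σ _).symm
    _ ≤ 2 * δ := by
        rw [expect_unifProb_comm]
        exact expect_le univ_nonempty fun W _ => hpair W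

lemma half_le_unifProb_sum_le [Fintype ι] [DecidableEq ι] [Nonempty ι] [Fintype V] [Nonempty V]
    {g : V → ℝ} (hg : ∀ v, 0 ≤ g v) {μ : ℝ} (hμ : 0 < μ) (h : 𝔼 v, g v ≤ μ) :
    1 / 2 ≤ unifProb fun T : ι → V => ∑ j, g (T j) ≤ 2 * (Fintype.card ι * μ) := by
  refine half_le_unifProb_le (fun T => sum_nonneg fun j _ => hg _) (by positivity) ?_
  calc 𝔼 T : ι → V, ∑ j, g (T j) = ∑ _j : ι, 𝔼 v, g v := by
        rw [expect_sum_comm]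
        simp only [expect_apply_eq_expect]
    _ ≤ Fintype.card ι * μ := by
        rw [sum_const, card_univ, nsmul_eq_mul]
        gcongr

lemma unifProb_exists_le_sum_abs_sum_le [Fintype κ] [Fintype V] [Nonempty V] {χ : κ → V → ℝ}
    (hχ : ∀ k v, |χ k v| ≤ 1) {L n : ℕ} (hL : 0 < L) (hn : 0 < n) {μ t : ℝ} (hμ : 0 < μ)
    (ht : 0 ≤ t) (hmean : ∀ Λ : Finset κ, #Λ = L → 𝔼 v, |∑ k ∈ Λ, χ k v| ≤ L * μ) :
    unifProb (fun T : Fin n → V => ∃ Λ : {Λ : Finset κ // #Λ = L},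
        n * (L * (2 * μ + t)) ≤ ∑ j, |∑ k ∈ Λ.1, χ k (T j)|) ≤
      4 * Fintype.card κ * Real.exp (-(n * t ^ 2 / 8)) := by
  have : NeZero n := ⟨hn.ne'⟩
  have hhalf (Λ : {Λ : Finset κ // #Λ = L}) :
      1 / 2 ≤ unifProb fun T : Fin n → V => ∑ j, |∑ k ∈ Λ.1, χ k (T j)| ≤ 2 * (n * (L * μ)) := by
    simpa only [Fintype.card_fin] using half_le_unifProb_sum_le (ι := Fin n)
      (fun v => abs_nonneg (∑ k ∈ Λ.1, χ k v)) (by positivity) (hmean Λ.1 Λ.2)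
  have hsq (T : Fin n → V) (k : κ) : ∑ j, χ k (T j) ^ 2 ≤ n := by
    calc ∑ j, χ k (T j) ^ 2 ≤ ∑ _j : Fin n, (1 : ℝ) :=
          sum_le_sum fun j _ => (sq_le_one_iff_abs_le_one _).2 (hχ k _)
      _ = n := by simp
  have hthreshold : n * (L * (2 * μ + t)) = 2 * (n * (L * μ)) + 2 * (L * (n * t / 2)) := by ring
  have hexponent : (n * t / 2) ^ 2 / (2 * n) = n * t ^ 2 / 8 := by
    field_simp
    ring
  rw [hthreshold, ← hexponent]
  calc unifProb (fun T : Fin n → V => ∃ Λ : {Λ : Finset κ // #Λ = L},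
          2 * (n * (L * μ)) + 2 * (L * (n * t / 2)) ≤ ∑ j, |∑ k ∈ Λ.1, χ k (T j)|)
    _ ≤ 2 * unifProb fun z : (Fin n → V) × (Fin n → V) => ∃ Λ : {Λ : Finset κ // #Λ = L},
          2 * (L * (n * t / 2)) ≤
            ∑ j, |∑ k ∈ Λ.1, χ k (z.1 j)| - ∑ j, |∑ k ∈ Λ.1, χ k (z.2 j)| :=
        unifProb_exists_add_le_le (fun (Λ : {Λ : Finset κ // #Λ = L}) (T : Fin n → V) =>
          ∑ j, |∑ k ∈ Λ.1, χ k (T j)|) hhalf _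
    _ ≤ 2 * (2 * (Fintype.card κ * Real.exp (-((n * t / 2) ^ 2 / (2 * n))))) := by
        gcongr
        exact unifProb_exists_le_sum_sub_sum_le
          (fun (Λ : {Λ : Finset κ // #Λ = L}) v => |∑ k ∈ Λ.1, χ k v|) fun T =>
            unifProb_exists_le_sum_smul_abs_sum_le (hsq T) hL (by positivity)
    _ = _ := by ring

end Symmetrization

/-! ### List decodability -/

/-- The nontrivial character `a ↦ (-1) ^ a` of `ZMod 2`, which turns Hamming distances into inner
products. -/
def signChar (a : ZMod 2) : ℝ := if a = 0 then 1 else -1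

lemma abs_signChar (a : ZMod 2) : |signChar a| = 1 := by
  unfold signChar
  split_ifs <;> simp

lemma signChar_mul_signChar (a b : ZMod 2) :
    signChar a * signChar b = 1 - 2 * if a ≠ b then 1 else 0 := by
  have hZMod : ∀ a : ZMod 2, a = 0 ∨ a = 1 := by decide
  rcases hZMod a with rfl | rfl <;> rcases hZMod b with rfl | rfl <;> norm_num [signChar]

/-- A code is given as a family of words, so that codewords are counted with multiplicity: `c` is
`(ρ, ℓ)`-list decodable if every ball of relative radius `ρ` contains at most `ℓ` of them. -/
def IsListDecodable {κ ι α : Type*} [Fintype ι] [DecidableEq α] (c : κ → ι → α) (ρ : ℝ) (ℓ : ℕ) :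
    Prop :=
  ∀ w, Nat.card {k // relDistOn (c k) w ≤ ρ} ≤ ℓ

section Codes

variable {κ ι : Type*} [Fintype ι]

lemma sum_signChar_mul_signChar (x y : ι → ZMod 2) :
    ∑ i, signChar (x i) * signChar (y i) = Fintype.card ι * (1 - 2 * relDistOn x y) := by
  have hcard : (Fintype.card ι : ℝ) * relDistOn x y = hammingDist x y :=
    mul_div_cancel_of_imp' fun h => by
      have : IsEmpty ι := Fintype.card_eq_zero_iff.1 (by exact_mod_cast h)
      simp [hammingDist]
  simp only [signChar_mul_signChar, sum_sub_distrib, ← mul_sum, sum_boole, sum_const, card_univ,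
    nsmul_eq_mul, mul_one]
  rw [mul_sub, mul_left_comm, hcard, mul_one, hammingDist]

lemma expect_signChar_mul_signChar [Nonempty ι] (x y : ι → ZMod 2) :
    𝔼 i, signChar (x i) * signChar (y i) = 1 - 2 * relDistOn x y := by
  rw [Fintype.expect_eq_sum_div_card, sum_signChar_mul_signChar,
    mul_div_cancel_left₀ _ (by simp)]

/-- The absolute value eliminates the centre of the ball. -/
lemma exists_le_sum_abs_sum_signChar [Finite κ] {c : κ → ι → ZMod 2} {δ : ℝ} {ℓ : ℕ}
    (h : ¬ IsListDecodable c (1 / 2 * (1 - δ)) ℓ) :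
    ∃ Λ : Finset κ, #Λ = ℓ + 1 ∧
      Fintype.card ι * ((ℓ + 1) * δ) ≤ ∑ j, |∑ k ∈ Λ, signChar (c k j)| := by
  have := Fintype.ofFinite κ
  obtain ⟨w, hw⟩ := not_forall.1 h
  rw [not_le, Nat.card_eq_fintype_card, Fintype.card_subtype] at hw
  obtain ⟨Λ, hΛ, hcard⟩ := exists_subset_card_eq (Nat.succ_le_of_lt hw)
  refine ⟨Λ, hcard, ?_⟩
  calc _ = ∑ _k ∈ Λ, Fintype.card ι * δ := by
        rw [sum_const, hcard, nsmul_eq_mul]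
        push_cast
        ring
    _ ≤ ∑ k ∈ Λ, ∑ j, signChar (c k j) * signChar (w j) := by
        refine sum_le_sum fun k hk => ?_
        rw [sum_signChar_mul_signChar]
        have hclose := (mem_filter.1 (hΛ hk)).2
        gcongr
        linarith
    _ = ∑ j, (∑ k ∈ Λ, signChar (c k j)) * signChar (w j) := by
        rw [sum_comm]
        simp only [sum_mul]
    _ ≤ _ := sum_le_sum fun j _ => (le_abs_self _).trans_eq (by
        rw [abs_mul, abs_signChar, mul_one])

lemma sum_one_sub_two_mul_relDistOn_le [Finite κ] {c : κ → ι → ZMod 2} {δ a : ℝ} (hδ : 0 ≤ δ)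
    (k : κ) (hclose : Nat.card {k' // relDistOn (c k') (c k) ≤ 1 / 2 * (1 - δ)} ≤ a)
    (Λ : Finset κ) : ∑ k' ∈ Λ, (1 - 2 * relDistOn (c k') (c k)) ≤ a + #Λ * δ := by
  have := Fintype.ofFinite κ
  have hnonneg (k' : κ) : 0 ≤ relDistOn (c k') (c k) := by unfold relDistOn; positivity
  rw [Nat.card_eq_fintype_card, Fintype.card_subtype] at hclose
  calc _ ≤ ∑ k' ∈ Λ, ((if relDistOn (c k') (c k) ≤ 1 / 2 * (1 - δ) then 1 else 0) + δ) :=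
        sum_le_sum fun k' _ => by
          split_ifs
          · linarith [hnonneg k']
          · linarith
    _ = #{k' ∈ Λ | relDistOn (c k') (c k) ≤ 1 / 2 * (1 - δ)} + #Λ * δ := by
        rw [sum_add_distrib, sum_boole, sum_const, nsmul_eq_mul]
    _ ≤ _ := by
        gcongr
        refine le_trans ?_ hclose
        gcongr
        exact subset_univ _

lemma expect_sq_sum_signChar_le [Finite κ] [Nonempty ι] {c : κ → ι → ZMod 2} {δ a : ℝ} (hδ : 0 ≤ δ)
    (hclose : ∀ k, Nat.card {k' // relDistOn (c k') (c k) ≤ 1 / 2 * (1 - δ)} ≤ a)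
    (Λ : Finset κ) : 𝔼 i, (∑ k ∈ Λ, signChar (c k i)) ^ 2 ≤ #Λ * (a + #Λ * δ) := by
  calc _ = ∑ k ∈ Λ, ∑ k' ∈ Λ, (1 - 2 * relDistOn (c k') (c k)) := by
        simp only [sq, sum_mul_sum, expect_sum_comm, ← expect_signChar_mul_signChar]
        exact sum_comm
    _ ≤ ∑ _k ∈ Λ, (a + #Λ * δ) :=
        sum_le_sum fun k _ => sum_one_sub_two_mul_relDistOn_le hδ k (hclose k) Λ
    _ = _ := by rw [sum_const, nsmul_eq_mul]

lemma sq_expect_abs_le [Nonempty ι] (f : ι → ℝ) : (𝔼 i, |f i|) ^ 2 ≤ 𝔼 i, f i ^ 2 := by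
  simpa only [one_mul, one_pow, Fintype.expect_one, sq_abs] using
    expect_mul_sq_le_sq_mul_sq univ (fun _ => 1) fun i => |f i|

lemma expect_abs_sum_signChar_le [Finite κ] [Nonempty ι] {c : κ → ι → ZMod 2} {ε : ℝ} (hε : 0 ≤ ε)
    {Λ : Finset κ}
    (hclose : ∀ k, Nat.card {k' // relDistOn (c k') (c k) ≤ 1 / 2 * (1 - ε ^ 2)} ≤ #Λ * ε ^ 2) :
    𝔼 i, |∑ k ∈ Λ, signChar (c k i)| ≤ #Λ * (3 / 2 * ε) := by
  refine abs_le_of_sq_le_sq' ?_ (by positivity) |>.2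
  calc _ ≤ 𝔼 i, (∑ k ∈ Λ, signChar (c k i)) ^ 2 := sq_expect_abs_le _
    _ ≤ #Λ * (#Λ * ε ^ 2 + #Λ * ε ^ 2) := expect_sq_sum_signChar_le (sq_nonneg ε) hclose Λ
    _ ≤ _ := by
        -- `√2 ≤ 3/2`
        nlinarith [sq_nonneg (#Λ * ε)]

lemma four_mul_mul_exp_neg_le {N x : ℝ} (hN : 2 ≤ N) (hx : 4 * Real.log N ≤ x) :
    4 * N * Real.exp (-x) ≤ 1 / N := by
  have hN0 : 0 < N := by linarith
  calc 4 * N * Real.exp (-x) ≤ 4 * N * Real.exp (-(4 * Real.log N)) := by gcongr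
    _ = 4 / N ^ 2 * (1 / N) := by
        rw [Real.exp_neg, ← Nat.cast_ofNat, Real.exp_nat_mul, Real.exp_log hN0]
        field_simp
    _ ≤ 1 * (1 / N) := by
        gcongr
        rw [div_le_one (by positivity)]
        nlinarith
    _ = 1 / N := one_mul _

theorem stmt16_general [Nonempty ι] [Finite κ] [Nonempty κ] (c : κ → ι → ZMod 2) {ε : ℝ}
    (hε : 0 < ε) {ℓ n : ℕ}
    (hclose : ∀ k,
      Nat.card {k' // relDistOn (c k') (c k) ≤ 1 / 2 * (1 - ε ^ 2)} ≤ ((ℓ + 1 : ℕ) : ℝ) * ε ^ 2)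
    (hn : 32 * Real.log (Nat.card κ) / ε ^ 2 ≤ n) :
    1 - 1 / (Nat.card κ : ℝ) ≤ unifProb fun T : Fin n → ι =>
      IsListDecodable (fun k j => c k (T j)) (1 / 2 * (1 - 4 * ε)) ℓ := by
  have := Fintype.ofFinite κ
  obtain hN | hN : Nat.card κ = 1 ∨ 2 ≤ Nat.card κ := by
    have := Nat.card_pos (α := κ)
    omega
  · rw [hN, Nat.cast_one, div_one, sub_self]
    exact unifProb_nonneg _
  have hN' : (2 : ℝ) ≤ Nat.card κ := by exact_mod_cast hN
  have hn0 : 0 < n := by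
    have hlog := Real.log_pos (one_lt_two.trans_le hN')
    have hpos : 0 < 32 * Real.log (Nat.card κ) / ε ^ 2 := by positivity
    exact_mod_cast hpos.trans_le hn
  have hlists := unifProb_exists_le_sum_abs_sum_le (V := ι) (χ := fun k i => signChar (c k i))
    (fun k i => (abs_signChar _).le) ℓ.succ_pos hn0 (μ := 3 / 2 * ε) (by positivity) hε.le
    fun Λ hΛ => hΛ ▸ expect_abs_sum_signChar_le hε.le (hΛ ▸ hclose)
  have hbad : unifProb (fun T : Fin n → ι =>
      ¬ IsListDecodable (fun k j => c k (T j)) (1 / 2 * (1 - 4 * ε)) ℓ) ≤ 1 / Nat.card κ := by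
    refine (unifProb_mono fun T hT => ?_).trans <| hlists.trans <| by
      rw [← Nat.card_eq_fintype_card]
      refine four_mul_mul_exp_neg_le hN' ?_
      rw [div_le_iff₀ (by positivity)] at hn
      linarith
    obtain ⟨Λ, hΛ, h⟩ := exists_le_sum_abs_sum_signChar hT
    refine ⟨⟨Λ, hΛ⟩, le_trans (le_of_eq ?_) h⟩
    rw [Fintype.card_fin]
    push_cast
    ring
  rw [unifProb_not] at hbad
  linarith

end Codes

/-! ### Linear codes -/

section LinearCodes

variable {ι α : Type*} [Fintype ι] [AddCommGroup α] [DecidableEq α]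

lemma relDistOn_sub_zero (f g : ι → α) : relDistOn (f - g) 0 = relDistOn f g := by
  simp [relDistOn, hammingDist, sub_eq_zero]

lemma card_relDistOn_le_eq (𝒞 : AddSubgroup (ι → α)) (f : 𝒞) (ρ : ℝ) :
    Nat.card {g : 𝒞 // relDistOn g.1 f.1 ≤ ρ} = Nat.card {g // g ∈ 𝒞 ∧ relDistOn g 0 ≤ ρ} :=
  Nat.card_congr <| ((Equiv.subRight f).subtypeEquiv fun g => by
    rw [Equiv.subRight_apply, AddSubgroup.coe_sub, relDistOn_sub_zero]).trans <|
    Equiv.subtypeSubtypeEquivSubtypeInter (· ∈ 𝒞) fun g => relDistOn g 0 ≤ ρ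

lemma one_sub_inv_card_le_of_addSubgroup [Nonempty ι] (𝒞 : AddSubgroup (ι → ZMod 2)) {ε : ℝ}
    (hε : 0 < ε) (hε1 : ε ≤ 1) {n : ℕ} (hn : 32 * Real.log (Nat.card 𝒞) / ε ^ 2 ≤ n) :
    1 - 1 / (Nat.card 𝒞 : ℝ) ≤ #{T : Fin n → ι | ∀ w : Fin n → ZMod 2,
        Nat.card {f // f ∈ 𝒞 ∧ relDistOn (fun j => f (T j)) w ≤ 1 / 2 * (1 - 4 * ε)} ≤
          ⌈Nat.card {f // f ∈ 𝒞 ∧ relDistOn f 0 ≤ 1 / 2 * (1 - ε ^ 2)} / ε ^ 2⌉₊ - 1} /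
      (Fintype.card (Fin n → ι) : ℝ) := by
  set A := Nat.card {f // f ∈ 𝒞 ∧ relDistOn f 0 ≤ 1 / 2 * (1 - ε ^ 2)}
  have hApos : 0 < A :=
    have : Nonempty {f // f ∈ 𝒞 ∧ relDistOn f 0 ≤ 1 / 2 * (1 - ε ^ 2)} :=
      ⟨0, 𝒞.zero_mem, by
        rw [relDistOn, hammingDist_self, Nat.cast_zero, zero_div]
        nlinarith⟩
    Nat.card_pos
  have hLpos : 0 < ⌈A / ε ^ 2⌉₊ := Nat.ceil_pos.2 (by positivity)
  have hclose (f : 𝒞) : Nat.card {g : 𝒞 // relDistOn g.1 f.1 ≤ 1 / 2 * (1 - ε ^ 2)} ≤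
      ((⌈A / ε ^ 2⌉₊ - 1 + 1 : ℕ) : ℝ) * ε ^ 2 := by
    rw [card_relDistOn_le_eq, Nat.sub_add_cancel hLpos, ← div_le_iff₀ (by positivity)]
    exact Nat.le_ceil _
  have hball (T : Fin n → ι) (w : Fin n → ZMod 2) (ρ : ℝ) :
      Nat.card {f : 𝒞 // relDistOn (fun j => f.1 (T j)) w ≤ ρ} =
        Nat.card {f // f ∈ 𝒞 ∧ relDistOn (fun j => f (T j)) w ≤ ρ} :=
    Nat.card_congr <| Equiv.subtypeSubtypeEquivSubtypeInter (· ∈ 𝒞) fun f =>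
      relDistOn (fun j => f (T j)) w ≤ ρ
  refine (stmt16_general (fun f : 𝒞 => f.1) hε hclose hn).trans_eq ?_
  simp only [IsListDecodable, hball]
  exact unifProb_eq_card_div _

end LinearCodes

/-- The Reed–Muller code `RMcode r m` as an additive group, to which the results on linear codes
apply. -/
def reedMuller (r m : ℕ) : AddSubgroup ((Fin m → ZMod 2) → ZMod 2) where
  carrier := RMcode r m
  zero_mem' := ⟨0, by simp⟩
  add_mem' := fun ⟨P, hP, hf⟩ ⟨Q, hQ, hg⟩ =>
    ⟨P + Q, (P.totalDegree_add Q).trans (max_le hP hQ), fun v => by simp [hf, hg]⟩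
  neg_mem' := fun ⟨P, hP, hf⟩ => ⟨-P, by rwa [P.totalDegree_neg], fun v => by simp [hf]⟩

/-- there is an absolute constant `C > 0` such that the following holds.  Let
`1 ≤ r ≤ m`, `ε ∈ (0, 1/4)`, let `A ≥ 2` be the number of codewords of `RM(r,m)` of relative
Hamming weight at most `(1/2)(1 − ε²)`, let `N = |RM(r,m)|` and `L = ⌈A/ε²⌉`.  Then for every
length `n ≥ C·ln(N)/ε²`, the randomly punctured code of length `n` (the `n` coordinates, i.e.
points of `F_2^m`, being drawn independently and uniformly) is `((1/2)(1 − 4ε), L − 1)`-list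
decodable (counting codewords with multiplicity) with probability at least `1 − 1/N`. -/
theorem stmt16 :
    ∃ C : ℝ, 0 < C ∧
      ∀ r m : ℕ, 1 ≤ r → r ≤ m →
      ∀ ε : ℝ, 0 < ε → ε < 1 / 4 →
      ∀ A N L : ℕ,
        A = Nat.card {f : (Fin m → ZMod 2) → ZMod 2 //
              f ∈ RMcode r m ∧ relDistOn f 0 ≤ (1 / 2) * (1 - ε ^ 2)} →
        N = Nat.card {f : (Fin m → ZMod 2) → ZMod 2 // f ∈ RMcode r m} →
        L = ⌈(A : ℝ) / ε ^ 2⌉₊ →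
        2 ≤ A →
      ∀ n : ℕ, C * Real.log N / ε ^ 2 ≤ n →
        1 - 1 / (N : ℝ) ≤
          ((Finset.univ.filter fun T : Fin n → (Fin m → ZMod 2) =>
              ∀ w : Fin n → ZMod 2,
                Nat.card {f : (Fin m → ZMod 2) → ZMod 2 //
                    f ∈ RMcode r m ∧
                    relDistOn (fun j => f (T j)) w ≤ (1 / 2) * (1 - 4 * ε)} ≤ L - 1).card : ℝ) /
            (Fintype.card (Fin n → (Fin m → ZMod 2)) : ℝ) := by
  refine ⟨32, by norm_num, ?_⟩
  rintro r m - - ε hε hε4 A N L rfl rfl rfl - n hn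
  exact one_sub_inv_card_le_of_addSubgroup (reedMuller r m) hε (by linarith) hn
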